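/- arXiv:1011.2157 — 4 statements merged into one kernel-verified Lean document; each statement's English description precedes it below -/
import Mathlib

section
/- Let w_1 ⋯ w_N be a standard product of monomials of degree d in S = K[x_1,…,x_n], and let w'_1 ⋯ w'_{N+1} be a standard product of monomials of degree d such that x_1^d · w_1 ⋯ w_N = w'_1 ⋯ w'_{N+1}. Then w'_1 ≥_lex w_1. -/
/-!
In a standard product all factors starting with the smallest variable `v` come first, and if the
remaining letters of these factors form the multiset `T`, then every other letter of the whole
product is at most every letter of `T`: the condition on a pair of factors with distinct first
letters says exactly that the later one is bounded by the tail of the earlier one. So `T` is an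
upper segment of the multiset of all letters.

The statement generalizes to two standard families `w`, `w'` where `w'` has at least as many
members and its letters are those of `w` plus a multiset `B` of letters that are at most every
letter of `w` (`monGE_of_upper_segment`). The generalization is proved by induction on the degree.
The first letter of the leading factor is the minimum of all letters, so the one for `w'` is at
most the one for `w`; if it is smaller we are done. If both equal `v`, restrict to the factors
beginning with `v`. There are at least as many of them in `w'`, because either all factors of `w'`
begin with `v` or every occurrence of `v` in `w'` is a first letter. The tails form upper segments
`T`, `T'` of the same multiset, with `|T| ≤ |T'|`, so `T ≤ T'` and the
difference is bounded by `T` (`upper_segment_le`). Hence the tails satisfy the hypotheses again.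
-/

/-- The multiset of variable indices of the monomial `x_{a 0} ⋯ x_{a (d-1)}`. A product of
monomials corresponds to the (multiset) sum of the index multisets. -/
def tupMul {n d : ℕ} (a : Fin d → Fin n) : Multiset (Fin n) := Finset.univ.val.map a

/-- `x_a >_lex x_b` for monomials given by (sorted) index tuples `a`, `b`, with
`x_1 > x_2 > ⋯ > x_n` (index `0` corresponds to `x_1`). -/
def monGT {n d : ℕ} (a b : Fin d → Fin n) : Prop :=
  ∃ s : Fin d, (∀ t, t < s → a t = b t) ∧ a s < b s

/-- `x_a ≥_lex x_b`. -/
def monGE {n d : ℕ} (a b : Fin d → Fin n) : Prop := a = b ∨ monGT a b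

/-- The standard pair condition on sorted index tuples: either they agree, or there is `s`
with `a t = b t` for `t < s`, `a s < b s` and, past `s`, every entry of `b` is ≤ every entry
of `a`. -/
def StdPair {n d : ℕ} (a b : Fin d → Fin n) : Prop :=
  a = b ∨ ∃ s : Fin d, (∀ t, t < s → a t = b t) ∧ a s < b s ∧
    ∀ t t' : Fin d, s < t → s < t' → b t ≤ a t'

/-- `w_1 ⋯ w_N` is a standard product: each factor is a monomial (sorted tuple) and every
pair of factors (in order) satisfies the standard pair condition. -/
def StdProd {n d N : ℕ} (w : Fin N → Fin d → Fin n) : Prop :=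
  (∀ i, Monotone (w i)) ∧ ∀ i j : Fin N, i < j → StdPair (w i) (w j)

theorem tupMul_succ {n d : ℕ} (a : Fin (d + 1) → Fin n) :
    tupMul a = a 0 ::ₘ tupMul (Fin.tail a) := by
  simp [tupMul, Fin.univ_succ, Fin.tail_def, Function.comp_def]

theorem mem_tupMul {n d : ℕ} {a : Fin d → Fin n} {x : Fin n} :
    x ∈ tupMul a ↔ ∃ t, a t = x := by
  simp [tupMul]

theorem StdPair.tail {n d : ℕ} {a b : Fin (d + 1) → Fin n} (h : StdPair a b) (h0 : a 0 = b 0) :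
    StdPair (Fin.tail a) (Fin.tail b) := by
  rcases h with rfl | ⟨s, h1, h2, h3⟩
  · exact Or.inl rfl
  · obtain ⟨s, rfl⟩ : ∃ s', s = Fin.succ s' := by
      refine Fin.exists_succ_eq.2 ?_ |>.imp fun _ h => h.symm
      rintro rfl
      exact h2.ne h0
    refine Or.inr ⟨s, fun t ht => h1 _ (Fin.succ_lt_succ_iff.2 ht), h2, fun t t' ht ht' => ?_⟩
    exact h3 _ _ (Fin.succ_lt_succ_iff.2 ht) (Fin.succ_lt_succ_iff.2 ht')

theorem StdPair.head_le {n d : ℕ} {a b : Fin (d + 1) → Fin n} (h : StdPair a b) :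
    a 0 ≤ b 0 := by
  rcases h with rfl | ⟨s, h1, h2, -⟩
  · exact le_rfl
  · rcases eq_or_ne s 0 with rfl | hs
    · exact h2.le
    · exact (h1 0 (Fin.pos_iff_ne_zero.2 hs)).le

/-- If the first letters differ, every letter of the later factor is at most every non-first
letter of the earlier one. For the first letter of `b` this uses that `b` is sorted. -/
theorem StdPair.le_tail {n d : ℕ} {a b : Fin (d + 1) → Fin n} (h : StdPair a b)
    (h0 : a 0 < b 0) (hb : Monotone b) (t : Fin (d + 1)) (u : Fin d) : b t ≤ a u.succ := by
  rcases h with rfl | ⟨s, h1, -, h3⟩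
  · exact absurd h0 (lt_irrefl _)
  · obtain rfl : s = 0 := by
      by_contra hs
      exact h0.ne (h1 0 (Fin.pos_iff_ne_zero.2 hs))
    rcases eq_or_ne t 0 with rfl | ht
    · exact (hb (Fin.zero_le u.succ)).trans (h3 _ _ (Fin.succ_pos u) (Fin.succ_pos u))
    · exact h3 _ _ (Fin.pos_iff_ne_zero.2 ht) (Fin.succ_pos u)

theorem StdProd.pair_or {n d N : ℕ} {w : Fin N → Fin d → Fin n} (hw : StdProd w) (i j : Fin N) :
    StdPair (w i) (w j) ∨ StdPair (w j) (w i) := by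
  rcases lt_trichotomy i j with h | rfl | h
  · exact Or.inl (hw.2 _ _ h)
  · exact Or.inl (Or.inl rfl)
  · exact Or.inr (hw.2 _ _ h)

/-- Of two upper segments `T`, `T'` of one multiset in a linear order, the one with fewer
elements is contained in the other, and the elements of the difference lie below it. -/
theorem upper_segment_le {α : Type*} [LinearOrder α] {T X T' X' : Multiset α}
    (h : T + X = T' + X') (hX : ∀ x ∈ X, ∀ y ∈ T, x ≤ y) (hX' : ∀ x ∈ X', ∀ y ∈ T', x ≤ y)
    (hcard : T.card ≤ T'.card) :
    ∃ B, T' = T + B ∧ ∀ b ∈ B, ∀ y ∈ T, b ≤ y := by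
  have hc (y : α) : T.count y + X.count y = T'.count y + X'.count y := by
    rw [← Multiset.count_add, ← Multiset.count_add, h]
  have hle : T ≤ T' := by
    by_contra hnot
    rw [Multiset.le_iff_count] at hnot
    push Not at hnot
    obtain ⟨x, hx⟩ := hnot
    have hxT : x ∈ T := Multiset.count_pos.1 (by omega)
    have hxX' : x ∈ X' := Multiset.count_pos.1 (by have := hc x; omega)
    -- The letter `x` separates `X` from `T'`, which forces `T' < T`.
    have hle' : T' ≤ T := by
      rw [Multiset.le_iff_count]
      intro y
      rcases lt_trichotomy y x with hy | rfl | hy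
      · have : T'.count y = 0 :=
          Multiset.count_eq_zero.2 fun hm => absurd (hX' x hxX' y hm) (not_le.2 hy)
        omega
      · exact hx.le
      · have : X.count y = 0 :=
          Multiset.count_eq_zero.2 fun hm => absurd (hX y hm x hxT) (not_le.2 hy)
        have := hc y
        omega
    have heq := Multiset.eq_of_le_of_card_le hle' hcard
    rw [heq] at hx
    exact lt_irrefl _ hx
  obtain ⟨B, rfl⟩ := Multiset.le_iff_exists_add.1 hle
  refine ⟨B, rfl, fun b hb y hy => hX b ?_ y hy⟩
  rw [add_assoc, add_right_inj] at h
  rw [h]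
  exact Multiset.mem_add.2 (Or.inl hb)

/-- In a pairwise standard family whose first letters are all at least `v`, the tails of the members
beginning with `v` form an upper segment of the multiset of all letters. -/
theorem exists_tails_add {n d : ℕ} {ι : Type} (I : Finset ι) (w : ι → Fin (d + 1) → Fin n)
    (v : Fin n) (hm : ∀ i ∈ I, Monotone (w i))
    (hp : ∀ i ∈ I, ∀ j ∈ I, StdPair (w i) (w j) ∨ StdPair (w j) (w i))
    (hv : ∀ i ∈ I, v ≤ w i 0) :
    ∃ R, ∑ i ∈ I, tupMul (w i) = ∑ i ∈ I with w i 0 = v, tupMul (Fin.tail (w i)) + R ∧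
      ∀ x ∈ R, ∀ y ∈ ∑ i ∈ I with w i 0 = v, tupMul (Fin.tail (w i)), x ≤ y := by
  refine ⟨∑ i ∈ I with w i 0 = v, {w i 0} + ∑ i ∈ I with ¬ w i 0 = v, tupMul (w i), ?_, ?_⟩
  · rw [← Finset.sum_filter_add_sum_filter_not I (fun i => w i 0 = v), ← add_assoc,
      ← Finset.sum_add_distrib]
    congr 1
    refine Finset.sum_congr rfl fun i _ => ?_
    rw [tupMul_succ, ← Multiset.singleton_add, add_comm {w i 0}]
  · intro x hx y hy
    obtain ⟨i, hi, hy⟩ := Multiset.mem_sum.1 hy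
    obtain ⟨hi, hiv⟩ := Finset.mem_filter.1 hi
    obtain ⟨u, rfl⟩ := mem_tupMul.1 hy
    rcases Multiset.mem_add.1 hx with hx | hx
    · obtain ⟨j, hj, hx⟩ := Multiset.mem_sum.1 hx
      rw [Multiset.mem_singleton.1 hx, (Finset.mem_filter.1 hj).2, ← hiv]
      exact hm i hi (Fin.zero_le _)
    · obtain ⟨j, hj, hx⟩ := Multiset.mem_sum.1 hx
      obtain ⟨hj, hjv⟩ := Finset.mem_filter.1 hj
      obtain ⟨t, rfl⟩ := mem_tupMul.1 hx
      have hlt : w i 0 < w j 0 := hiv ▸ lt_of_le_of_ne (hv j hj) (Ne.symm hjv)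
      rcases hp i hi j hj with h | h
      · exact h.le_tail hlt (hm j hj) t u
      · exact absurd h.head_le (not_le.2 hlt)

theorem card_heads_le_count {n d : ℕ} {ι : Type} (I : Finset ι) (w : ι → Fin (d + 1) → Fin n)
    (v : Fin n) :
    (I.filter fun i => w i 0 = v).card ≤ (∑ i ∈ I, tupMul (w i)).count v := by
  rw [Multiset.count_sum', Finset.card_filter]
  refine Finset.sum_le_sum fun i _ => ?_
  rw [tupMul_succ, Multiset.count_cons]
  split_ifs with h1 h2
  · omega
  · exact absurd h1.symm h2
  all_goals omega

/-- If some member `w j` begins with a letter larger than `v`, the smallest letter `v` occurs in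
the family only as a first letter: all non-first letters of members beginning with `v` are
at least `w j 0`. -/
theorem count_le_card_heads {n d : ℕ} {ι : Type} (I : Finset ι) (w : ι → Fin (d + 1) → Fin n)
    (v : Fin n) (hm : ∀ i ∈ I, Monotone (w i))
    (hp : ∀ i ∈ I, ∀ j ∈ I, StdPair (w i) (w j) ∨ StdPair (w j) (w i))
    (hv : ∀ i ∈ I, v ≤ w i 0) {j : ι} (hj : j ∈ I) (hjv : w j 0 ≠ v) :
    (∑ i ∈ I, tupMul (w i)).count v ≤ (I.filter fun i => w i 0 = v).card := by
  rw [Multiset.count_sum', Finset.card_filter]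
  refine Finset.sum_le_sum fun i hi => ?_
  have hvj : v < w j 0 := lt_of_le_of_ne (hv j hj) (Ne.symm hjv)
  have htail : (tupMul (Fin.tail (w i))).count v = 0 := by
    refine Multiset.count_eq_zero.2 fun hmem => ?_
    obtain ⟨u, hu⟩ := mem_tupMul.1 hmem
    change w i u.succ = v at hu
    have hiv : w i 0 = v := le_antisymm (hu ▸ hm i hi (Fin.zero_le _)) (hv i hi)
    have hlt : w i 0 < w j 0 := hiv ▸ hvj
    rcases hp i hi j hj with h | h
    · exact absurd (h.le_tail hlt (hm j hj) 0 u) (not_le.2 (hu ▸ hvj))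
    · exact absurd h.head_le (not_le.2 hlt)
  rw [tupMul_succ, Multiset.count_cons, htail]
  split_ifs with h1 h2 h2
  · omega
  · exact absurd h1.symm h2
  all_goals omega

theorem card_tails {n d : ℕ} {ι : Type} (I : Finset ι) (w : ι → Fin d → Fin n) :
    (∑ i ∈ I, tupMul (w i)).card = I.card * d := by
  simp [tupMul]

/-- The comparison of leading factors in its inductive form. The families are indexed by finsets,
with every two members standard in one of the two orders and a designated leading member `i₀`, so
that passing to a subfamily requires no reindexing. -/
theorem monGE_of_upper_segment {n d : ℕ} {ι ι' : Type} (I : Finset ι) (I' : Finset ι')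
    (w : ι → Fin d → Fin n) (w' : ι' → Fin d → Fin n) (i₀ : ι) (i₀' : ι') (B : Multiset (Fin n))
    (hm : ∀ i ∈ I, Monotone (w i)) (hm' : ∀ i ∈ I', Monotone (w' i))
    (hp : ∀ i ∈ I, ∀ j ∈ I, StdPair (w i) (w j) ∨ StdPair (w j) (w i))
    (hp' : ∀ i ∈ I', ∀ j ∈ I', StdPair (w' i) (w' j) ∨ StdPair (w' j) (w' i))
    (h₀ : i₀ ∈ I) (h₀' : i₀' ∈ I')
    (hlead : ∀ i ∈ I, StdPair (w i₀) (w i)) (hlead' : ∀ i ∈ I', StdPair (w' i₀') (w' i))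
    (hcard : I.card ≤ I'.card)
    (heq : ∑ i ∈ I', tupMul (w' i) = ∑ i ∈ I, tupMul (w i) + B)
    (hB : ∀ b ∈ B, ∀ i ∈ I, ∀ t, b ≤ w i t) :
    monGE (w' i₀') (w i₀) := by
  induction d generalizing I I' B with
  | zero => exact Or.inl (Subsingleton.elim _ _)
  | succ d ih =>
    have hv (i) (hi : i ∈ I) : w i₀ 0 ≤ w i 0 := (hlead i hi).head_le
    have hv' (i) (hi : i ∈ I') : w' i₀' 0 ≤ w' i 0 := (hlead' i hi).head_le
    have hle : w' i₀' 0 ≤ w i₀ 0 := by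
      have hmem : w i₀ 0 ∈ ∑ i ∈ I', tupMul (w' i) := by
        rw [heq]
        exact Multiset.mem_add.2 (Or.inl (Multiset.mem_sum.2 ⟨i₀, h₀, mem_tupMul.2 ⟨0, rfl⟩⟩))
      obtain ⟨i, hi, hx⟩ := Multiset.mem_sum.1 hmem
      obtain ⟨t, ht⟩ := mem_tupMul.1 hx
      rw [← ht]
      exact (hv' i hi).trans (hm' i hi (Fin.zero_le t))
    rcases hle.lt_or_eq with hlt | hv0
    · exact Or.inr ⟨0, fun t ht => absurd ht (Fin.not_lt_zero t), hlt⟩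
    obtain ⟨v, hvdef⟩ : ∃ v, v = w i₀ 0 := ⟨_, rfl⟩
    rw [← hvdef] at hv hv0
    rw [hv0] at hv'
    have hJ : (I.filter fun i => w i 0 = v).card ≤ (I'.filter fun i => w' i 0 = v).card := by
      by_cases hall : ∀ i ∈ I', w' i 0 = v
      · rw [Finset.filter_true_of_mem hall]
        exact (Finset.card_filter_le _ _).trans hcard
      · push Not at hall
        obtain ⟨j, hj, hjv⟩ := hall
        refine (card_heads_le_count I w v).trans (le_trans ?_
          (count_le_card_heads I' w' v hm' hp' hv' hj hjv))
        rw [heq, Multiset.count_add]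
        exact Nat.le_add_right _ _
    obtain ⟨R, hR, hRle⟩ := exists_tails_add I w v hm hp hv
    obtain ⟨R', hR', hRle'⟩ := exists_tails_add I' w' v hm' hp' hv'
    obtain ⟨C, hC, hCle⟩ := upper_segment_le (X := R + B) (X' := R')
      (by rw [← add_assoc, ← hR, ← heq, hR'])
      (fun x hx y hy => by
        rcases Multiset.mem_add.1 hx with hx | hx
        · exact hRle x hx y hy
        · obtain ⟨i, hi, hy⟩ := Multiset.mem_sum.1 hy
          obtain ⟨u, rfl⟩ := mem_tupMul.1 hy
          exact hB x hx i (Finset.mem_filter.1 hi).1 _)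
      hRle' (by rw [card_tails, card_tails]; exact Nat.mul_le_mul_right d hJ)
    have key : monGE (Fin.tail (w' i₀')) (Fin.tail (w i₀)) := by
      refine ih (I.filter fun i => w i 0 = v) (I'.filter fun i => w' i 0 = v)
        (fun i => Fin.tail (w i)) (fun i => Fin.tail (w' i)) C ?_ ?_ ?_ ?_
        (Finset.mem_filter.2 ⟨h₀, hvdef.symm⟩) (Finset.mem_filter.2 ⟨h₀', hv0⟩) ?_ ?_ hJ hC ?_
      · exact fun i hi s t hst =>
          hm i (Finset.mem_filter.1 hi).1 (Fin.succ_le_succ_iff.2 hst)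
      · exact fun i hi s t hst =>
          hm' i (Finset.mem_filter.1 hi).1 (Fin.succ_le_succ_iff.2 hst)
      · intro i hi j hj
        rw [Finset.mem_filter] at hi hj
        exact (hp i hi.1 j hj.1).imp (fun h => h.tail (hi.2.trans hj.2.symm))
          (fun h => h.tail (hj.2.trans hi.2.symm))
      · intro i hi j hj
        rw [Finset.mem_filter] at hi hj
        exact (hp' i hi.1 j hj.1).imp (fun h => h.tail (hi.2.trans hj.2.symm))
          (fun h => h.tail (hj.2.trans hi.2.symm))
      · intro i hi
        rw [Finset.mem_filter] at hi
        exact (hlead i hi.1).tail (hvdef.symm.trans hi.2.symm)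
      · intro i hi
        rw [Finset.mem_filter] at hi
        exact (hlead' i hi.1).tail (hv0.trans hi.2.symm)
      · exact fun b hb i hi t =>
          hCle b hb _ (Multiset.mem_sum.2 ⟨i, hi, mem_tupMul.2 ⟨t, rfl⟩⟩)
    have h00 : w' i₀' 0 = w i₀ 0 := hv0.trans hvdef
    rcases key with h | ⟨s, h1, h2⟩
    · refine Or.inl (funext fun t => ?_)
      refine Fin.cases h00 (fun u => congrFun h u) t
    · refine Or.inr ⟨s.succ, fun t => ?_, h2⟩
      refine Fin.cases (fun _ => h00) (fun u hu => h1 u (Fin.succ_lt_succ_iff.1 hu)) t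

/-- if `w_1 ⋯ w_N` is a standard product of monomials of degree `d` and
`w'_1 ⋯ w'_{N+1}` is a standard product with `x_1^d · w_1 ⋯ w_N = w'_1 ⋯ w'_{N+1}`,
then `w'_1 ≥_lex w_1`. -/
theorem stmt0 {n d N : ℕ} (hn : 0 < n) (hd : 0 < d) (hN : 0 < N)
    (w : Fin N → Fin d → Fin n) (w' : Fin (N + 1) → Fin d → Fin n)
    (hw : StdProd w) (hw' : StdProd w')
    (heq : Multiset.replicate d (⟨0, hn⟩ : Fin n) + ∑ i, tupMul (w i) = ∑ i, tupMul (w' i)) :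
    monGE (w' 0) (w ⟨0, hN⟩) := by
  -- The extra factor `x_1^d` is the case `B = {x_1, …, x_1}`.
  refine monGE_of_upper_segment Finset.univ Finset.univ w w' ⟨0, hN⟩ 0
    (Multiset.replicate d (⟨0, hn⟩ : Fin n)) (fun i _ => hw.1 i) (fun i _ => hw'.1 i)
    (fun i _ j _ => hw.pair_or i j) (fun i _ j _ => hw'.pair_or i j) (Finset.mem_univ _)
    (Finset.mem_univ _) (fun i _ => ?_) (fun i _ => ?_) (by simp) (by rw [← heq, add_comm]) ?_
  · rcases eq_or_ne i ⟨0, hN⟩ with rfl | h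
    · exact Or.inl rfl
    · refine hw.2 _ _ (Fin.lt_def.2 ?_)
      have : i.val ≠ 0 := fun h0 => h (Fin.ext h0)
      simp only
      omega
  · rcases eq_or_ne i 0 with rfl | h
    · exact Or.inl rfl
    · exact hw'.2 _ _ (Fin.pos_iff_ne_zero.2 h)
  · intro b hb i _ t
    rw [Multiset.eq_of_mem_replicate hb]
    exact Fin.le_def.2 (Nat.zero_le _)
end

section
/- Let u_1 ⋯ u_N and w_1 ⋯ w_N be standard products of monomials of degree d in S = K[x_1,…,x_n] such that u_1 ⋯ u_N · x_n = x_1 · w_1 ⋯ w_N. Then u_1 ≥_lex w_1. -/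
/-- The factors agreeing with the factor `o` in all columns before `s`. -/
def agreeGroup {n d N : ℕ} (u : Fin N → Fin d → Fin n) (o : Fin N) (s : ℕ) : Finset (Fin N) :=
  Finset.univ.filter fun j => ∀ t : Fin d, (t : ℕ) < s → u j t = u o t

/-- The positions (factor, column) of the tail at `s`: the factors agreeing with `o` before `s`,
and the columns from `s` on. -/
def tailPos {n d N : ℕ} (u : Fin N → Fin d → Fin n) (o : Fin N) (s : ℕ) :
    Finset (Fin N × Fin d) :=
  agreeGroup u o s ×ˢ Finset.univ.filter fun t : Fin d => s ≤ (t : ℕ)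

/-- The positions of the tail at `s` whose entry exceeds `e`. -/
def tailAbove {n d N : ℕ} (u : Fin N → Fin d → Fin n) (o : Fin N) (s : ℕ) (e : Fin n) :
    Finset (Fin N × Fin d) :=
  (tailPos u o s).filter fun p => e < u p.1 p.2

/-- The tail of `u` at `s` is dominated by that of `w`: the group of `w` is no larger, and the
`k`-th largest tail entry of `w` is at least the `k`-th largest tail entry of `u`. The latter is
expressed by counting the entries above each threshold `e` that is not below the whole tail
of `w`. -/
def Dominated {n d N : ℕ} (u w : Fin N → Fin d → Fin n) (o : Fin N) (s : ℕ) : Prop :=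
  (agreeGroup w o s).card ≤ (agreeGroup u o s).card ∧
    ∀ e : Fin n, (∃ p ∈ tailPos w o s, w p.1 p.2 ≤ e) →
      (tailAbove u o s e).card ≤ (tailAbove w o s e).card

section

variable {n d N : ℕ} {u w : Fin N → Fin d → Fin n} {o : Fin N}

lemma mem_agreeGroup {s : ℕ} {j : Fin N} :
    j ∈ agreeGroup u o s ↔ ∀ t : Fin d, (t : ℕ) < s → u j t = u o t := by
  simp [agreeGroup]

lemma mem_tailPos {s : ℕ} {p : Fin N × Fin d} :
    p ∈ tailPos u o s ↔ p.1 ∈ agreeGroup u o s ∧ s ≤ (p.2 : ℕ) := by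
  simp [tailPos]

lemma mem_tailAbove {s : ℕ} {e : Fin n} {p : Fin N × Fin d} :
    p ∈ tailAbove u o s e ↔ (p.1 ∈ agreeGroup u o s ∧ s ≤ (p.2 : ℕ)) ∧ e < u p.1 p.2 := by
  simp [tailAbove, mem_tailPos]

lemma mem_agreeGroup_succ {s : Fin d} {j : Fin N} :
    j ∈ agreeGroup u o (s + 1) ↔ j ∈ agreeGroup u o s ∧ u j s = u o s := by
  simp only [mem_agreeGroup]
  constructor
  · exact fun h => ⟨fun t ht => h t (by omega), h s (by omega)⟩
  · rintro ⟨h, hs⟩ t ht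
    rcases Nat.lt_succ_iff_lt_or_eq.1 ht with h1 | h1
    · exact h t h1
    · rwa [Fin.ext h1]

lemma self_mem_agreeGroup {s : ℕ} : o ∈ agreeGroup u o s :=
  mem_agreeGroup.2 fun _ _ => rfl

lemma agreeGroup_succ_subset (s : Fin d) : agreeGroup u o (s + 1) ⊆ agreeGroup u o s :=
  fun _ hj => (mem_agreeGroup_succ.1 hj).1

/-- If two factors in standard position agree before column `s` and differ there, then `s` is the
column at which the standard pair condition is realized. -/
lemma StdPair.of_ne {a b : Fin d → Fin n} (h : StdPair a b) {s : Fin d}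
    (hlt : ∀ t : Fin d, (t : ℕ) < s → a t = b t) (hs : a s ≠ b s) :
    a s < b s ∧ ∀ t t' : Fin d, s < t → s < t' → b t ≤ a t' := by
  rcases h with rfl | ⟨r, hr, hr', hr''⟩
  · exact absurd rfl hs
  · rcases lt_trichotomy r s with h1 | rfl | h1
    · exact absurd (hlt r h1) hr'.ne
    · exact ⟨hr', hr''⟩
    · exact absurd (hr s h1) hs

/-- Within the group at `s`, column `s` takes its least value at the first factor. -/
lemma first_le (hu : StdProd u) (ho : ∀ j, o ≤ j) {s : Fin d} {j : Fin N}
    (hj : j ∈ agreeGroup u o s) : u o s ≤ u j s := by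
  by_cases hs : u o s = u j s
  · exact hs.le
  · have hoj : o < j := lt_of_le_of_ne (ho j) (by rintro rfl; exact hs rfl)
    exact ((hu.2 o j hoj).of_ne (fun t ht => (mem_agreeGroup.1 hj t ht).symm) hs).1.le

lemma first_lt (hu : StdProd u) (ho : ∀ j, o ≤ j) {s : Fin d} {j : Fin N}
    (hj : j ∈ agreeGroup u o s) (hj' : j ∉ agreeGroup u o (s + 1)) : u o s < u j s :=
  lt_of_le_of_ne (first_le hu ho hj) fun h => hj' (mem_agreeGroup_succ.2 ⟨hj, h.symm⟩)

/-- Past column `s`, the factors leaving the group at `s` have entries bounded by those of the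
factors that stay. -/
lemma tail_le_of_mem_of_notMem (hu : StdProd u) (ho : ∀ j, o ≤ j) {s : Fin d} {i j : Fin N}
    (hi : i ∈ agreeGroup u o (s + 1)) (hj : j ∈ agreeGroup u o s)
    (hj' : j ∉ agreeGroup u o (s + 1)) {t t' : Fin d} (ht : s < t) (ht' : s < t') :
    u j t ≤ u i t' := by
  obtain ⟨hi1, hi2⟩ := mem_agreeGroup_succ.1 hi
  have hlt : u i s < u j s := hi2 ▸ first_lt hu ho hj hj'
  have hag : ∀ t : Fin d, (t : ℕ) < s → u i t = u j t := fun t ht =>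
    (mem_agreeGroup.1 hi1 t ht).trans (mem_agreeGroup.1 hj t ht).symm
  rcases lt_trichotomy i j with h | rfl | h
  · exact ((hu.2 i j h).of_ne hag hlt.ne).2 t t' ht ht'
  · exact absurd hi hj'
  · exact absurd ((hu.2 j i h).of_ne (fun t ht => (hag t ht).symm) hlt.ne').1 hlt.asymm

lemma card_tailPos (s : ℕ) : (tailPos u o s).card =
    (agreeGroup u o s).card * (Finset.univ.filter fun t : Fin d => s ≤ (t : ℕ)).card :=
  Finset.card_product _ _

lemma Dominated.card_tailPos_le {s : ℕ} (h : Dominated u w o s) :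
    (tailPos w o s).card ≤ (tailPos u o s).card := by
  rw [card_tailPos, card_tailPos]
  exact Nat.mul_le_mul_right _ h.1

/-- If `w_1(s)` were smaller than `u_1(s)`, then the whole tail of `u` would lie above `w_1(s)`,
while the tail of `w`, which is no longer, contains `w_1(s)` itself. -/
lemma Dominated.le (hu : StdProd u) (ho : ∀ j, o ≤ j) {s : Fin d} (h : Dominated u w o s) :
    u o s ≤ w o s := by
  by_contra! hlt
  have hmem : (o, s) ∈ tailPos w o s := mem_tailPos.2 ⟨self_mem_agreeGroup, le_rfl⟩
  have h1 := h.2 (w o s) ⟨(o, s), hmem, le_rfl⟩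
  have h2 : tailPos u o s ⊆ tailAbove u o s (w o s) := by
    intro p hp
    have hp' := mem_tailPos.1 hp
    exact mem_tailAbove.2
      ⟨hp', hlt.trans_le ((first_le hu ho hp'.1).trans (hu.1 p.1 hp'.2))⟩
  have h3 : tailAbove w o s (w o s) ⊂ tailPos w o s :=
    Finset.filter_ssubset.2 ⟨(o, s), hmem, lt_irrefl _⟩
  have h4 := Finset.card_le_card h2
  have h5 := Finset.card_lt_card h3
  have h6 := h.card_tailPos_le
  omega

/-- The factors in the group at `s + 1` all have the entry `w_1(s)` in column `s`; so these
positions and the ones with entry above `w_1(s)` fit disjointly into the tail. -/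
lemma card_tailAbove_add_le {s : Fin d} :
    (tailAbove w o s (w o s)).card + (agreeGroup w o (s + 1)).card ≤ (tailPos w o s).card := by
  have hdis : Disjoint (tailAbove w o s (w o s)) (agreeGroup w o (s + 1) ×ˢ {s}) := by
    rw [Finset.disjoint_left]
    rintro ⟨j, t⟩ h1 h2
    simp only [Finset.mem_product, Finset.mem_singleton] at h2
    obtain ⟨h2, rfl⟩ := h2
    exact (mem_tailAbove.1 h1).2.ne' (mem_agreeGroup_succ.1 h2).2
  have hsub : tailAbove w o s (w o s) ∪ agreeGroup w o (s + 1) ×ˢ {s} ⊆ tailPos w o s := by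
    refine Finset.union_subset (Finset.filter_subset _ _) ?_
    rintro ⟨j, t⟩ h2
    simp only [Finset.mem_product, Finset.mem_singleton] at h2
    obtain ⟨h2, rfl⟩ := h2
    exact mem_tailPos.2 ⟨agreeGroup_succ_subset _ h2, le_rfl⟩
  have := Finset.card_le_card hsub
  rwa [Finset.card_union_of_disjoint hdis, Finset.card_product, Finset.card_singleton,
    mul_one] at this

/-- If some factor `j` leaves the group at `s`, then every tail entry other than the `s`-th entries
of the remaining factors exceeds `u_1(s)`. -/
lemma card_tailPos_le_add (hu : StdProd u) (ho : ∀ j, o ≤ j) {s : Fin d} {j : Fin N}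
    (hj : j ∈ agreeGroup u o s) (hj' : j ∉ agreeGroup u o (s + 1)) :
    (tailPos u o s).card ≤ (tailAbove u o s (u o s)).card + (agreeGroup u o (s + 1)).card := by
  have hsub : tailPos u o s ⊆ tailAbove u o s (u o s) ∪ agreeGroup u o (s + 1) ×ˢ {s} := by
    rintro ⟨i, t⟩ hp
    have hp' := mem_tailPos.1 hp
    obtain ⟨hi, ht⟩ := hp'
    simp only [Finset.mem_union, Finset.mem_product, Finset.mem_singleton]
    by_cases hi' : i ∈ agreeGroup u o (s + 1)
    · rcases eq_or_lt_of_le (show s ≤ t from ht) with rfl | hst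
      · exact Or.inr ⟨hi', rfl⟩
      · refine Or.inl (mem_tailAbove.2 ⟨⟨hi, ht⟩, ?_⟩)
        calc u o s < u j s := first_lt hu ho hj hj'
          _ ≤ u j t := hu.1 j hst.le
          _ ≤ u i t := tail_le_of_mem_of_notMem hu ho hi' hj hj' hst hst
    · exact Or.inl (mem_tailAbove.2
        ⟨⟨hi, ht⟩, (first_lt hu ho hi hi').trans_le (hu.1 i ht)⟩)
  refine (Finset.card_le_card hsub).trans ((Finset.card_union_le _ _).trans ?_)
  rw [Finset.card_product, Finset.card_singleton, mul_one]

/-- A threshold `e` that is not below the whole tail at `s + 1` bounds every entry of the tail at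
`s` that is not in the tail at `s + 1`. -/
lemma tailAbove_subset_succ (hw : StdProd w) (ho : ∀ j, o ≤ j) {s : Fin d} {e : Fin n}
    (he : ∃ p ∈ tailPos w o (s + 1), w p.1 p.2 ≤ e) :
    tailAbove w o s e ⊆ tailAbove w o (s + 1) e := by
  obtain ⟨⟨i, t⟩, hp, hle⟩ := he
  obtain ⟨hi, ht⟩ := mem_tailPos.1 hp
  have hst : s < t := ht
  rintro ⟨j, t'⟩ hq
  obtain ⟨⟨hj, ht'⟩, hlt⟩ := mem_tailAbove.1 hq
  have hst' : s ≤ t' := ht'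
  simp only at hle hlt
  have hj' : j ∈ agreeGroup w o (s + 1) := by
    by_contra hj'
    refine hlt.not_ge (le_trans ?_ hle)
    rcases eq_or_lt_of_le hst' with rfl | h
    · exact (hw.1 j hst.le).trans (tail_le_of_mem_of_notMem hw ho hi hj hj' hst hst)
    · exact tail_le_of_mem_of_notMem hw ho hi hj hj' h hst
  refine mem_tailAbove.2 ⟨⟨hj', ?_⟩, hlt⟩
  rcases eq_or_lt_of_le hst' with rfl | h
  · refine absurd (le_trans ?_ hle) hlt.not_ge
    rw [(mem_agreeGroup_succ.1 hj').2, ← (mem_agreeGroup_succ.1 hi).2]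
    exact hw.1 i hst.le
  · exact h

lemma Dominated.succ (hu : StdProd u) (hw : StdProd w) (ho : ∀ j, o ≤ j) {s : Fin d}
    (h : Dominated u w o s) (hs : u o s = w o s) : Dominated u w o (s + 1) := by
  constructor
  · by_cases hG : agreeGroup u o s ⊆ agreeGroup u o (s + 1)
    · exact (Finset.card_le_card (agreeGroup_succ_subset s)).trans
        (h.1.trans (Finset.card_le_card hG))
    · obtain ⟨j, hj, hj'⟩ := Finset.not_subset.1 hG
      have h1 := card_tailPos_le_add hu ho hj hj'
      have h2 := card_tailAbove_add_le (w := w) (o := o) (s := s)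
      have h3 := h.2 (w o s) ⟨(o, s), mem_tailPos.2 ⟨self_mem_agreeGroup, le_rfl⟩, le_rfl⟩
      have h4 := h.card_tailPos_le
      rw [hs] at h1
      omega
  · intro e he
    have hsub : tailAbove u o (s + 1) e ⊆ tailAbove u o s e := by
      intro p hp
      obtain ⟨⟨h1, h2⟩, h3⟩ := mem_tailAbove.1 hp
      exact mem_tailAbove.2 ⟨⟨agreeGroup_succ_subset s h1, by omega⟩, h3⟩
    have he' : ∃ p ∈ tailPos w o s, w p.1 p.2 ≤ e := by
      obtain ⟨p, hp, hle⟩ := he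
      obtain ⟨h1, h2⟩ := mem_tailPos.1 hp
      exact ⟨p, mem_tailPos.2 ⟨agreeGroup_succ_subset s h1, by omega⟩, hle⟩
    exact (Finset.card_le_card hsub).trans
      ((h.2 e he').trans (Finset.card_le_card (tailAbove_subset_succ hw ho he)))

lemma card_tailAbove_zero (e : Fin n) :
    (tailAbove u o 0 e).card = (∑ i, tupMul (u i)).countP (e < ·) := by
  have h1 : (∑ i, tupMul (u i)).countP (e < ·) = ∑ i, (tupMul (u i)).countP (e < ·) :=
    map_sum (Multiset.countPAddMonoidHom (e < ·)) _ _
  have h2 : tailAbove u o 0 e =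
      (Finset.univ ×ˢ Finset.univ).filter fun p : Fin N × Fin d => e < u p.1 p.2 := by
    ext p
    simp [mem_tailAbove, mem_agreeGroup]
  rw [h1, h2, Finset.card_filter, Finset.sum_product]
  refine Finset.sum_congr rfl fun i _ => ?_
  rw [← Finset.card_filter, tupMul, Multiset.countP_map]
  rfl

end

/-- if `u_1 ⋯ u_N` and `w_1 ⋯ w_N` are standard products of monomials of
degree `d` with `u_1 ⋯ u_N · x_n = x_1 · w_1 ⋯ w_N`, then `u_1 ≥_lex w_1`. -/
theorem stmt1 {n d N : ℕ} (hn : 0 < n) (hd : 0 < d) (hN : 0 < N)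
    (u w : Fin N → Fin d → Fin n) (hu : StdProd u) (hw : StdProd w)
    (heq : (∑ i, tupMul (u i)) + {(⟨n - 1, by omega⟩ : Fin n)} =
      ({(⟨0, hn⟩ : Fin n)} : Multiset (Fin n)) + ∑ i, tupMul (w i)) :
    monGE (u ⟨0, hN⟩) (w ⟨0, hN⟩) := by
  set o : Fin N := ⟨0, hN⟩ with ho_def
  have ho : ∀ j, o ≤ j := fun j => Nat.zero_le _
  have h0 : Dominated u w o 0 := by
    refine ⟨by simp [agreeGroup], fun e _ => ?_⟩
    rw [card_tailAbove_zero, card_tailAbove_zero]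
    have h := congrArg (Multiset.countP (e < ·)) heq
    have hz : ¬ e < (⟨0, hn⟩ : Fin n) := Nat.not_lt_zero _
    rw [Multiset.countP_add, Multiset.countP_add,
      Multiset.countP_eq_zero (s := {(⟨0, hn⟩ : Fin n)}) |>.2 (by simpa using hz)] at h
    omega
  have hdom : ∀ s : ℕ, s ≤ d → (∀ t : Fin d, (t : ℕ) < s → u o t = w o t) →
      Dominated u w o s := by
    intro s
    induction s with
    | zero => exact fun _ _ => h0
    | succ s ih =>
      intro hs hag
      exact Dominated.succ (s := ⟨s, hs⟩) hu hw ho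
        (ih (by omega) fun t ht => hag t (by omega)) (hag ⟨s, hs⟩ (Nat.lt_succ_self s))
  by_cases hne : u o = w o
  · exact Or.inl hne
  · have hex : ∃ s : Fin d, u o s ≠ w o s := Function.ne_iff.1 hne
    obtain ⟨s, hs, hmin⟩ := WellFounded.has_min (wellFounded_lt (α := Fin d))
      {s | u o s ≠ w o s} hex
    have hag : ∀ t, t < s → u o t = w o t := fun t ht => by
      by_contra h
      exact hmin t h ht
    exact Or.inr ⟨s, hag, lt_of_le_of_ne ((hdom s s.2.le hag).le hu ho) hs⟩
end

section
/- Let u_1,…,u_N, w_1,…,w_N be monomials of degree d in S = K[x_1,…,x_n] such that x_n · u_1 ⋯ u_N = x_1 · w_1 ⋯ w_N, where u_1 ⋯ u_N and w_1 ⋯ w_N are standard products. Then u_N ≥_lex w_N. -/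
/-- The tuples `a` and `p` agree in all positions before `t`. -/
def Agree {n d : ℕ} (a p : Fin d → Fin n) (t : ℕ) : Prop := ∀ r : Fin d, r.val < t → a r = p r

open Classical in
/-- The number of factors of `w` that agree with `p` in all positions before `t`. -/
noncomputable def agreeCount {n d N : ℕ} (w : Fin N → Fin d → Fin n) (p : Fin d → Fin n)
    (t : ℕ) : ℕ := (Finset.univ.filter fun i => Agree (w i) p t).card

/-- The number of variables `x_k`, with multiplicity, in the product `w` with `k < c`. -/
def countLT {n d N : ℕ} (w : Fin N → Fin d → Fin n) (c : Fin n) : ℕ :=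
  ∑ i, (Finset.univ.filter fun q => w i q < c).card

/-- `StdPair a p` bounds `a` by `p` at every position up to and including the first one where
they differ. -/
lemma StdPair.le_of_agree {n d : ℕ} {a p : Fin d → Fin n} (h : StdPair a p) {q : Fin d}
    (hq : Agree a p q) : a q ≤ p q := by
  rcases h with rfl | ⟨s, h1, h2, -⟩
  · exact le_rfl
  · rcases lt_trichotomy q s with h | rfl | h
    · exact (h1 q h).le
    · exact h2.le
    · exact absurd (hq s h) h2.ne

/-- A row entry smaller than `p t` lies in the block described by positions `≤ t` preceded by
agreement with `p`. -/
lemma StdPair.of_lt {n d : ℕ} {a p : Fin d → Fin n} (h : StdPair a p) (ha : Monotone a)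
    (hp : Monotone p) {q t : Fin d} (hq : a q < p t) :
    q ≤ t ∧ Agree a p q := by
  have key : Agree a p q := by
    rcases h with rfl | ⟨s, h1, h2, h3⟩
    · exact fun _ _ => rfl
    · by_contra hc
      have hsq : s < q := by
        by_contra hsq
        exact hc fun r hr => h1 r (lt_of_lt_of_le (Fin.lt_def.2 hr) (not_lt.1 hsq))
      rcases lt_or_ge s t with hst | hst
      · exact absurd (h3 t q hst hsq) (not_le.2 hq)
      · exact absurd ((hp (hst.trans hsq.le)).trans (h3 q q hsq hsq)) (not_le.2 hq)
  refine ⟨?_, key⟩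
  by_contra hc
  have hc := not_le.1 hc
  have := ha hc.le
  rw [key t hc] at this
  exact absurd this (not_le.2 hq)

lemma agree_succ {n d : ℕ} {a p : Fin d → Fin n} {t : Fin d} :
    Agree a p (t.val + 1) ↔ Agree a p t ∧ a t = p t := by
  constructor
  · exact fun h => ⟨fun r hr => h r (by omega), h t (by omega)⟩
  · rintro ⟨h1, h2⟩ r hr
    rcases Nat.lt_succ_iff_lt_or_eq.1 hr with h | h
    · exact h1 r h
    · rwa [Fin.ext h]

open Classical in
/-- Double counting of the block `{(i, r) | r ≤ t, w i agrees with p before r}`. -/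
lemma sum_agreeCount {n d N : ℕ} (w : Fin N → Fin d → Fin n) (p : Fin d → Fin n) (t : Fin d) :
    ∑ r ∈ Finset.Iic t, agreeCount w p r =
      ∑ i, (Finset.univ.filter fun r : Fin d => r ≤ t ∧ Agree (w i) p r).card := by
  have h : ∀ i, (Finset.univ.filter fun r : Fin d => r ≤ t ∧ Agree (w i) p r) =
      (Finset.Iic t).filter fun r : Fin d => Agree (w i) p r := by
    intro i; ext r; simp
  simp only [h, agreeCount, Finset.card_filter]
  exact Finset.sum_comm

lemma sum_agreeCount_le_countLT {n d N : ℕ} {w : Fin N → Fin d → Fin n} {p : Fin d → Fin n}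
    (h : ∀ i, StdPair (w i) p) (hp : Monotone p) {t : Fin d} {c : Fin n} (hc : p t < c) :
    ∑ r ∈ Finset.Iic t, agreeCount w p r ≤ countLT w c := by
  classical
  rw [sum_agreeCount]
  refine Finset.sum_le_sum fun i _ => Finset.card_le_card fun r hr => ?_
  simp only [Finset.mem_filter, Finset.mem_univ, true_and] at hr ⊢
  exact (((h i).le_of_agree hr.2).trans (hp hr.1)).trans_lt hc

lemma countLT_add_agreeCount_le {n d N : ℕ} {w : Fin N → Fin d → Fin n} {p : Fin d → Fin n}
    (h : ∀ i, StdPair (w i) p) (hw : ∀ i, Monotone (w i)) (hp : Monotone p) (t : Fin d) :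
    countLT w (p t) + agreeCount w p (t.val + 1) ≤ ∑ r ∈ Finset.Iic t, agreeCount w p r := by
  classical
  rw [sum_agreeCount, countLT, agreeCount, Finset.card_filter, ← Finset.sum_add_distrib]
  refine Finset.sum_le_sum fun i _ => ?_
  have hsub : (Finset.univ.filter fun q => w i q < p t) ⊆
      Finset.univ.filter fun r : Fin d => r ≤ t ∧ Agree (w i) p r := by
    intro q hq
    simp only [Finset.mem_filter, Finset.mem_univ, true_and] at hq ⊢
    exact (h i).of_lt (hw i) hp hq
  split_ifs with hA
  · rw [agree_succ] at hA
    -- the position `t` is in the block, but its entry is not smaller than `p t`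
    refine Finset.card_lt_card (Finset.ssubset_iff_subset_ne.2 ⟨hsub, fun he => ?_⟩)
    have ht := Finset.ext_iff.1 he t
    simp [hA.1, hA.2] at ht
  · exact Finset.card_le_card hsub

lemma sum_agreeCount_le {n d N : ℕ} {w : Fin N → Fin d → Fin n} {p : Fin d → Fin n}
    (h : ∀ i, StdPair (w i) p) {t : Fin d} (ht : ∀ r < t, p r < p t) :
    ∑ r ∈ Finset.Iic t, agreeCount w p r ≤ countLT w (p t) + agreeCount w p (t.val + 1) := by
  classical
  rw [sum_agreeCount, countLT, agreeCount, Finset.card_filter, ← Finset.sum_add_distrib]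
  refine Finset.sum_le_sum fun i _ => ?_
  have key : ∀ r : Fin d, r ≤ t → Agree (w i) p r →
      ¬ (r = t ∧ Agree (w i) p (t.val + 1)) → w i r < p t := by
    intro r hr hA hn
    rcases hr.lt_or_eq with hlt | rfl
    · exact ((h i).le_of_agree hA).trans_lt (ht r hlt)
    · refine lt_of_le_of_ne ((h i).le_of_agree hA) fun he => hn ⟨rfl, agree_succ.2 ⟨hA, he⟩⟩
  split_ifs with hA
  · refine le_trans (Finset.card_le_card ?_) (Finset.card_insert_le t _)
    intro r hr
    simp only [Finset.mem_filter, Finset.mem_univ, true_and, Finset.mem_insert] at hr ⊢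
    by_cases hrt : r = t
    · exact Or.inl hrt
    · exact Or.inr (key r hr.1 hr.2 fun h => hrt h.1)
  · rw [add_zero]
    refine Finset.card_le_card fun r hr => ?_
    simp only [Finset.mem_filter, Finset.mem_univ, true_and] at hr ⊢
    exact key r hr.1 hr.2 fun h => hA h.2

/-- If `p t` repeats an earlier entry of `p`, then agreement before `t` forces agreement at `t`. -/
lemma agreeCount_succ_of_eq {n d N : ℕ} {w : Fin N → Fin d → Fin n} {p : Fin d → Fin n}
    (h : ∀ i, StdPair (w i) p) (hw : ∀ i, Monotone (w i)) {r t : Fin d} (hrt : r < t)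
    (he : p r = p t) : agreeCount w p (t.val + 1) = agreeCount w p t := by
  classical
  unfold agreeCount
  congr 1
  ext i
  simp only [Finset.mem_filter, Finset.mem_univ, true_and, agree_succ, and_iff_left_iff_imp]
  intro hA
  refine le_antisymm ((h i).le_of_agree hA) ?_
  rw [← he, ← hA r hrt]
  exact hw i hrt.le

lemma countP_sum_tupMul {n d N : ℕ} (w : Fin N → Fin d → Fin n) (c : Fin n) :
    Multiset.countP (· < c) (∑ i, tupMul (w i)) = countLT w c := by
  rw [← Multiset.coe_countPAddMonoidHom, map_sum]
  refine Finset.sum_congr rfl fun i _ => ?_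
  rw [Multiset.coe_countPAddMonoidHom, tupMul, Multiset.countP_map]
  rfl

/-- If `p` and `q` agree before `s`, then domination of the counting functions passes to the
numbers of factors agreeing with `p`, respectively `q`, before `t ≤ s`. -/
lemma agreeCount_le_agreeCount {n d N : ℕ} {u w : Fin N → Fin d → Fin n} {p q : Fin d → Fin n}
    (hup : ∀ i, StdPair (u i) p) (hwq : ∀ i, StdPair (w i) q) (hu : ∀ i, Monotone (u i))
    (hw : ∀ i, Monotone (w i)) (hp : Monotone p)
    (hle : ∀ c, countLT w c ≤ countLT u c) {s : Fin d} (hs : ∀ t < s, p t = q t) (t : ℕ)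
    (ht : t ≤ s) : agreeCount u p t ≤ agreeCount w q t := by
  induction t using Nat.strong_induction_on with
  | _ t ih =>
  rcases t with _ | t
  · simp [agreeCount, Agree]
  · have hts : t < s := ht
    obtain ⟨T, rfl⟩ : ∃ T : Fin d, T.val = t := ⟨⟨t, by omega⟩, rfl⟩
    by_cases hT : ∀ r < T, p r < p T
    · have hT' : ∀ r < T, q r < q T := by
        intro r hr
        rw [← hs r (hr.trans hts), ← hs T hts]
        exact hT r hr
      have h1 := countLT_add_agreeCount_le hup hu hp T
      have h2 := sum_agreeCount_le hwq hT'
      have h3 : ∑ r ∈ Finset.Iic T, agreeCount u p r ≤ ∑ r ∈ Finset.Iic T, agreeCount w q r := by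
        refine Finset.sum_le_sum fun r hr => ?_
        have hr : r.val ≤ T.val := Fin.le_def.1 (Finset.mem_Iic.1 hr)
        exact ih r (by omega) (by omega)
      have h4 := hle (p T)
      rw [← hs T hts] at h2
      omega
    · push Not at hT
      obtain ⟨r, hr, hle'⟩ := hT
      have he : p r = p T := le_antisymm (hp hr.le) hle'
      have he' : q r = q T := by rw [← hs r (hr.trans hts), ← hs T hts, he]
      rw [agreeCount_succ_of_eq hup hu hr he, agreeCount_succ_of_eq hwq hw hr he']
      exact ih T (by omega) (by omega)

lemma StdProd.stdPair_last {n d N : ℕ} {w : Fin N → Fin d → Fin n} (hw : StdProd w) (hN : 0 < N)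
    (i : Fin N) : StdPair (w i) (w ⟨N - 1, by omega⟩) := by
  by_cases h : i = ⟨N - 1, by omega⟩
  · exact Or.inl (by rw [← h])
  · refine hw.2 i _ (Fin.lt_def.2 ?_)
    have : i.val ≠ N - 1 := fun hc => h (Fin.ext hc)
    show i.val < N - 1
    omega

/-- if `u_1 ⋯ u_N` and `w_1 ⋯ w_N` are standard products of monomials of
degree `d` with `x_n · u_1 ⋯ u_N = x_1 · w_1 ⋯ w_N`, then `u_N ≥_lex w_N`. -/
theorem stmt3 {n d N : ℕ} (hn : 0 < n) (hd : 0 < d) (hN : 0 < N)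
    (u w : Fin N → Fin d → Fin n) (hu : StdProd u) (hw : StdProd w)
    (heq : ({(⟨n - 1, by omega⟩ : Fin n)} : Multiset (Fin n)) + ∑ i, tupMul (u i) =
      ({(⟨0, hn⟩ : Fin n)} : Multiset (Fin n)) + ∑ i, tupMul (w i)) :
    monGE (u ⟨N - 1, by omega⟩) (w ⟨N - 1, by omega⟩) := by
  have hle : ∀ c, countLT w c ≤ countLT u c := by
    intro c
    have h := congrArg (Multiset.countP (· < c)) heq
    rw [Multiset.countP_add, Multiset.countP_add, countP_sum_tupMul, countP_sum_tupMul] at h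
    have h0 : Multiset.countP (· < c) ({(⟨n - 1, by omega⟩ : Fin n)} : Multiset (Fin n)) = 0 := by
      rw [Multiset.countP_eq_zero]
      intro a ha
      rw [Multiset.mem_singleton] at ha
      rw [ha, Fin.lt_def, not_lt]
      exact Nat.le_sub_one_of_lt c.isLt
    omega
  have hup := hu.stdPair_last hN
  have hwq := hw.stdPair_last hN
  have hp := hu.1 ⟨N - 1, by omega⟩
  have hq := hw.1 ⟨N - 1, by omega⟩
  have hcount : ∀ t, 0 < agreeCount u (u ⟨N - 1, by omega⟩) t := by
    classical
    exact fun t => Finset.card_pos.2 ⟨⟨N - 1, by omega⟩,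
      Finset.mem_filter.2 ⟨Finset.mem_univ _, fun _ _ => rfl⟩⟩
  generalize u ⟨N - 1, by omega⟩ = p at *
  generalize w ⟨N - 1, by omega⟩ = q at *
  by_cases hpq : p = q
  · exact Or.inl hpq
  obtain ⟨s, hs, hmin⟩ := WellFounded.has_min (wellFounded_lt (α := Fin d)) {s | p s ≠ q s}
    (Function.ne_iff.1 hpq)
  have hs' : ∀ t < s, p t = q t := fun t ht => not_not.1 fun hc => hmin t hc ht
  refine Or.inr ⟨s, hs', lt_of_le_of_ne (not_lt.1 fun hlt => ?_) hs⟩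
  have h1 := sum_agreeCount_le_countLT hwq hq hlt
  have h2 := countLT_add_agreeCount_le hup hu.1 hp s
  have h3 : ∑ r ∈ Finset.Iic s, agreeCount u p r ≤ ∑ r ∈ Finset.Iic s, agreeCount w q r :=
    Finset.sum_le_sum fun r hr =>
      agreeCount_le_agreeCount hup hwq hu.1 hw.1 hp hle hs' r
        (Fin.le_def.1 (Finset.mem_Iic.1 hr))
  have h4 := hle (p s)
  have h5 := hcount (s.val + 1)
  omega
end

section
/- Let L(u,v) ⊂ M_d be a lexsegment set and let u_1,…,u_N ∈ L(u,v). If w_1,…,w_N ∈ M_d are such that w_1 ⋯ w_N is a standard product with w_1 ⋯ w_N = u_1 ⋯ u_N, then w_1,…,w_N ∈ L(u,v). -/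
/-! ### Index words restricted to a window -/

/-- The number of positions `j` in the window `[t, d)` whose entry `a j` satisfies `p`. -/
def cnt (p : ℕ → Prop) [DecidablePred p] (a : ℕ → ℕ) (t d : ℕ) : ℕ :=
  ((Finset.Ico t d).filter (fun j => p (a j))).card

/-- The index word `a` restricted to `[t, d)` is lexicographically smaller than that of `b`; the
monomial of `a` is thus the *larger* one. -/
def LexLT (a b : ℕ → ℕ) (t d : ℕ) : Prop :=
  ∃ s, t ≤ s ∧ s < d ∧ (∀ j, t ≤ j → j < s → a j = b j) ∧ a s < b s

/-- The standard pair condition of `StdPair`, for index words restricted to `[t, d)`. -/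
def Std (a b : ℕ → ℕ) (t d : ℕ) : Prop :=
  (∀ j, t ≤ j → j < d → a j = b j) ∨ ∃ s, t ≤ s ∧ s < d ∧ (∀ j, t ≤ j → j < s → a j = b j) ∧
    a s < b s ∧ ∀ j j', s < j → j < d → s < j' → j' < d → b j ≤ a j'

/-- The index word `a` is weakly increasing on `[0, d)`. -/
def MonoOn (a : ℕ → ℕ) (d : ℕ) : Prop := ∀ i j, i ≤ j → j < d → a i ≤ a j

lemma cnt_le (p : ℕ → Prop) [DecidablePred p] (a : ℕ → ℕ) (t d : ℕ) : cnt p a t d ≤ d - t := by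
  unfold cnt
  exact (Finset.card_filter_le _ _).trans (by simp)

lemma cnt_full (p : ℕ → Prop) [DecidablePred p] (a : ℕ → ℕ) (t d : ℕ)
    (h : ∀ j, t ≤ j → j < d → p (a j)) : cnt p a t d = d - t := by
  unfold cnt
  rw [Finset.filter_true_of_mem (by simpa using h)]
  simp

lemma cnt_zero (p : ℕ → Prop) [DecidablePred p] (a : ℕ → ℕ) (t d : ℕ)
    (h : ∀ j, t ≤ j → j < d → ¬ p (a j)) : cnt p a t d = 0 := by
  unfold cnt
  rw [Finset.filter_false_of_mem (by simpa using h)]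
  simp

lemma cnt_split (p : ℕ → Prop) [DecidablePred p] (a : ℕ → ℕ) (t r d : ℕ) (h : t ≤ r)
    (h' : r ≤ d) : cnt p a t d = cnt p a t r + cnt p a r d := by
  unfold cnt
  rw [← Finset.Ico_union_Ico_eq_Ico h h', Finset.filter_union, Finset.card_union_of_disjoint]
  exact Finset.disjoint_filter_filter (Finset.Ico_disjoint_Ico_consecutive t r d)

lemma cnt_pos (p : ℕ → Prop) [DecidablePred p] (a : ℕ → ℕ) (t d : ℕ)
    (h : cnt p a t d ≠ 0) : ∃ j, t ≤ j ∧ j < d ∧ p (a j) := by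
  by_contra! hc
  exact h (cnt_zero p a t d hc)

lemma cnt_one (p : ℕ → Prop) [DecidablePred p] (a : ℕ → ℕ) (t : ℕ) :
    cnt p a t (t + 1) = if p (a t) then 1 else 0 := by
  split_ifs with h
  · rw [cnt_full]
    · omega
    · intro j h1 h2
      obtain rfl : j = t := by omega
      exact h
  · rw [cnt_zero]
    intro j h1 h2
    obtain rfl : j = t := by omega
    exact h

/-! ### The smallest factor -/

/-- If the entries of the words `u i`, `i ∈ U`, dominate those of the standard family `w i`,
`i ∈ W`, on `[t, d)`, then not every `u i` can precede the last word `w l`. -/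
lemma last_aux {N d : ℕ} (w u : Fin N → ℕ → ℕ) (hw : ∀ i, MonoOn (w i) d)
    (hu : ∀ i, MonoOn (u i) d) (l : Fin N) :
    ∀ e t : ℕ, d = t + e → ∀ W U : Finset (Fin N), W.card = U.card → l ∈ W →
      (∀ i ∈ W, i ≤ l) →
      (∀ i ∈ W, ∀ j ∈ W, i < j → Std (w i) (w j) t d) →
      (∀ c, ∑ i ∈ U, cnt (· < c) (u i) t d ≤ ∑ i ∈ W, cnt (· < c) (w i) t d) →
      (∀ i ∈ U, LexLT (u i) (w l) t d) → False := by
  intro e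
  induction e using Nat.strong_induction_on with
  | _ e ih =>
  intro t hd W U hcard hl hmax hstd hdom hlex
  have hUne : U.Nonempty := by
    rw [← Finset.card_pos, ← hcard]
    exact Finset.card_pos.2 ⟨l, hl⟩
  have htd : t < d := by
    obtain ⟨i, hi⟩ := hUne
    obtain ⟨s, h1, h2, -⟩ := hlex i hi
    omega
  set M := w l t with hM
  have huM : ∀ i ∈ U, u i t ≤ M := by
    intro i hi
    obtain ⟨s, h1, h2, h3, h4⟩ := hlex i hi
    rcases h1.eq_or_lt with rfl | h
    · exact h4.le
    · exact (h3 t le_rfl h).le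
  have hwM : ∀ i ∈ W, w i t ≤ M := by
    intro i hi
    rcases (hmax i hi).eq_or_lt with rfl | hlt
    · exact le_rfl
    rcases hstd i hi l hl hlt with h | ⟨s, h1, h2, h3, h4, -⟩
    · exact (h t le_rfl htd).le
    rcases h1.eq_or_lt with rfl | h
    · exact h4.le
    · exact (h3 t le_rfl h).le
  have htail : ∀ i ∈ W, ∀ j, t + 1 ≤ j → j < d → M ≤ w i j := by
    intro i hi j hj hjd
    rcases (hmax i hi).eq_or_lt with rfl | hlt
    · exact hw i t j (by omega) hjd
    rcases hstd i hi l hl hlt with h | ⟨s, h1, h2, h3, h4, h5⟩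
    · rw [h j (by omega) hjd]
      exact hw l t j (by omega) hjd
    rcases h1.eq_or_lt with rfl | h
    · exact (hw l t j (by omega) hjd).trans (h5 j j (by omega) hjd (by omega) hjd)
    · rw [hM, ← h3 t le_rfl h]
      exact hw i t j (by omega) hjd
  set W' := W.filter (fun i => w i t = M) with hW'
  set U0 := U.filter (fun i => u i t = M) with hU0
  have hcw : ∑ i ∈ W, cnt (· < M) (w i) t d = (W.filter (fun i => ¬ w i t = M)).card := by
    rw [Finset.card_filter]
    refine Finset.sum_congr rfl fun i hi => ?_
    rw [cnt_split _ _ t (t + 1) d (by omega) (by omega), cnt_one,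
      cnt_zero (· < M) (w i) (t + 1) d (fun j h1 h2 => not_lt.2 (htail i hi j h1 h2))]
    have := hwM i hi
    split_ifs <;> omega
  have hcu : (U.filter (fun i => ¬ u i t = M)).card ≤ ∑ i ∈ U, cnt (· < M) (u i) t d := by
    rw [Finset.card_filter]
    refine Finset.sum_le_sum fun i hi => ?_
    rw [cnt_split _ _ t (t + 1) d (by omega) (by omega), cnt_one]
    have := huM i hi
    split_ifs <;> omega
  have hk : W'.card ≤ U0.card := by
    have h1 := Finset.card_filter_add_card_filter_not (s := W) (fun i => w i t = M)
    have h2 := Finset.card_filter_add_card_filter_not (s := U) (fun i => u i t = M)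
    have h3 := hdom M
    rw [hW', hU0]
    omega
  obtain ⟨U', hU'sub, hU'card⟩ := Finset.exists_subset_card_eq hk
  have hU'U : U' ⊆ U := hU'sub.trans (Finset.filter_subset _ _)
  have hU't : ∀ i ∈ U', u i t = M := fun i hi => (Finset.mem_filter.1 (hU'sub hi)).2
  refine ih (e - 1) (by omega) (t + 1) (by omega) W' U' hU'card.symm
    (Finset.mem_filter.2 ⟨hl, rfl⟩) (fun i hi => hmax i (Finset.mem_filter.1 hi).1) ?_ ?_ ?_
  · intro i hi j hj hij
    rw [hW', Finset.mem_filter] at hi hj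
    rcases hstd i hi.1 j hj.1 hij with h | ⟨s, h1, h2, h3, h4, h5⟩
    · exact Or.inl fun k hk => h k (by omega)
    · refine Or.inr ⟨s, ?_, h2, fun k hk => h3 k (by omega), h4, h5⟩
      rcases h1.eq_or_lt with rfl | h
      · omega
      · omega
  · intro c
    rcases le_or_gt c M with hc | hc
    · rw [Finset.sum_eq_zero]
      · exact Nat.zero_le _
      intro i hi
      refine cnt_zero _ _ _ _ fun j h1 h2 => ?_
      have := hu i t j (by omega) h2
      have := hU't i hi
      omega
    by_cases hex : ∃ i ∈ W, w i t ≠ M ∧ ∃ j, t + 1 ≤ j ∧ j < d ∧ w i j < c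
    · -- The tails of `W'` lie below all others, so here all their entries are counted.
      obtain ⟨i, hi, hiM, j, hj, hjd, hjc⟩ := hex
      have hfull : ∀ i' ∈ W', cnt (· < c) (w i') (t + 1) d = d - (t + 1) := by
        intro i' hi'
        rw [hW', Finset.mem_filter] at hi'
        refine cnt_full _ _ _ _ fun j' h1 h2 => ?_
        have hle := hwM i hi
        rcases lt_trichotomy i i' with h | rfl | h
        · rcases hstd i hi i' hi'.1 h with h | ⟨s, g1, g2, g3, g4, g5⟩
          · exact absurd ((h t le_rfl htd).trans hi'.2) hiM
          rcases g1.eq_or_lt with rfl | g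
          · exact (g5 j' j (by omega) h2 (by omega) hjd).trans_lt hjc
          · exact absurd ((g3 t le_rfl g).trans hi'.2) hiM
        · exact absurd hi'.2 hiM
        · rcases hstd i' hi'.1 i hi h with h | ⟨s, g1, g2, g3, g4, g5⟩
          · exact absurd ((h t le_rfl htd).symm.trans hi'.2) hiM
          rcases g1.eq_or_lt with rfl | g
          · omega
          · exact absurd ((g3 t le_rfl g).symm.trans hi'.2) hiM
      rw [Finset.sum_congr rfl hfull, Finset.sum_const, ← hU'card, ← Finset.sum_const]
      exact Finset.sum_le_sum fun i _ => cnt_le _ _ _ _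
    · -- Only `W'` contributes beyond the first column, and both first columns are fully counted.
      push Not at hex
      have h1 : ∑ i ∈ W, cnt (· < c) (w i) t d
          = W.card + ∑ i ∈ W', cnt (· < c) (w i) (t + 1) d := by
        rw [hW', Finset.sum_filter, Finset.card_eq_sum_ones, ← Finset.sum_add_distrib]
        refine Finset.sum_congr rfl fun i hi => ?_
        have := hwM i hi
        rw [cnt_split _ _ t (t + 1) d (by omega) (by omega), cnt_one, if_pos (by omega)]
        split_ifs with hi'
        · rfl
        · rw [cnt_zero (· < c) (w i) (t + 1) d fun j h1 h2 => not_lt.2 (hex i hi hi' j h1 h2)]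
      have h2 : U.card + ∑ i ∈ U', cnt (· < c) (u i) (t + 1) d
          ≤ ∑ i ∈ U, cnt (· < c) (u i) t d := by
        have h3 : ∑ i ∈ U', cnt (· < c) (u i) (t + 1) d
            ≤ ∑ i ∈ U, cnt (· < c) (u i) (t + 1) d :=
          Finset.sum_le_sum_of_subset hU'U
        refine (Nat.add_le_add_left h3 _).trans ?_
        rw [Finset.card_eq_sum_ones, ← Finset.sum_add_distrib]
        refine Finset.sum_le_sum fun i hi => ?_
        have := huM i hi
        rw [cnt_split _ _ t (t + 1) d (by omega) (by omega), cnt_one, if_pos (by omega)]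
      have := hdom c
      omega
  · intro i hi
    obtain ⟨s, h1, h2, h3, h4⟩ := hlex i (hU'U hi)
    refine ⟨s, ?_, h2, fun k hk => h3 k (by omega), h4⟩
    have := hU't i hi
    rcases h1.eq_or_lt with rfl | h
    · omega
    · omega

/-! ### The largest factor -/

/-- If the entries of the standard family `w i`, `i ∈ W`, dominate those of the words `u i`,
`i ∈ U`, on `[t, d)`, then the first word `w f` cannot precede every `u i`. -/
lemma first_aux {N d : ℕ} (w u : Fin N → ℕ → ℕ) (hw : ∀ i, MonoOn (w i) d)
    (hu : ∀ i, MonoOn (u i) d) (f : Fin N) :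
    ∀ e t : ℕ, d = t + e → ∀ W U : Finset (Fin N), W.card = U.card → f ∈ W →
      (∀ i ∈ W, f ≤ i) →
      (∀ i ∈ W, ∀ j ∈ W, i < j → Std (w i) (w j) t d) →
      (∀ c, ∑ i ∈ U, cnt (c ≤ ·) (u i) t d ≤ ∑ i ∈ W, cnt (c ≤ ·) (w i) t d) →
      (∀ i ∈ U, LexLT (w f) (u i) t d) → False := by
  intro e
  induction e using Nat.strong_induction_on with
  | _ e ih =>
  intro t hd W U hcard hf hmin hstd hdom hlex
  have hUne : U.Nonempty := by
    rw [← Finset.card_pos, ← hcard]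
    exact Finset.card_pos.2 ⟨f, hf⟩
  have htd : t < d := by
    obtain ⟨i, hi⟩ := hUne
    obtain ⟨s, h1, h2, -⟩ := hlex i hi
    omega
  set m := w f t with hm
  -- `r` is the end of the initial run of `m` in `w f`.
  obtain ⟨r, htr, hrd, hr, hr'⟩ : ∃ r, t ≤ r ∧ r < d ∧ w f r = m ∧
      ∀ j, r < j → j < d → m < w f j := by
    have hne : ((Finset.Ico t d).filter (fun j => w f j = m)).Nonempty :=
      ⟨t, by simp [htd, hm]⟩
    have hmem := Finset.max'_mem _ hne
    set r := ((Finset.Ico t d).filter (fun j => w f j = m)).max' hne with hrdef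
    simp only [Finset.mem_filter, Finset.mem_Ico] at hmem
    refine ⟨r, hmem.1.1, hmem.1.2, hmem.2, fun j h1 h2 => ?_⟩
    refine lt_of_le_of_ne (hw f t j (by omega) h2) fun h => ?_
    have : j ≤ r := Finset.le_max' _ _ (by
      simp only [Finset.mem_filter, Finset.mem_Ico]
      exact ⟨⟨by omega, h2⟩, h.symm⟩)
    omega
  have hfrun : ∀ j, t ≤ j → j ≤ r → w f j = m := fun j h1 h2 =>
    le_antisymm (hr ▸ hw f j r h2 hrd) (hw f t j h1 (by omega))
  have hwm : ∀ i ∈ W, m ≤ w i t := by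
    intro i hi
    rcases (hmin i hi).eq_or_lt with rfl | hlt
    · exact le_rfl
    rcases hstd f hf i hi hlt with h | ⟨s, h1, h2, h3, h4, -⟩
    · exact (h t le_rfl htd).le
    rcases h1.eq_or_lt with rfl | h
    · exact h4.le
    · exact (h3 t le_rfl h).le
  have hum : ∀ i ∈ U, m ≤ u i t := by
    intro i hi
    obtain ⟨s, h1, h2, h3, h4⟩ := hlex i hi
    rcases h1.eq_or_lt with rfl | h
    · exact h4.le
    · exact (h3 t le_rfl h).le
  have hwrun : ∀ i ∈ W, w i r = m → ∀ j, t ≤ j → j ≤ r → w i j = m := fun i hi h j h1 h2 =>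
    le_antisymm (h ▸ hw i j r h2 hrd) ((hwm i hi).trans (hw i t j h1 (by omega)))
  have hurun : ∀ i ∈ U, u i r = m → ∀ j, t ≤ j → j ≤ r → u i j = m := fun i hi h j h1 h2 =>
    le_antisymm (h ▸ hu i j r h2 hrd) ((hum i hi).trans (hu i t j h1 (by omega)))
  -- A factor with a shorter run separates from one with the full run exactly at position `r`.
  have hsep : ∀ i' ∈ W, w i' r = m → ∀ i ∈ W, w i r ≠ m →
      (∀ j, t ≤ j → j < r → w i j = m) ∧
      ∀ j j', r < j → j < d → r < j' → j' < d → w i j ≤ w i' j' := by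
    intro i' hi' hi'm i hi him
    have hmi : m ≤ w i r := (hwm i hi).trans (hw i t r htr hrd)
    rcases lt_trichotomy i' i with hlt | rfl | hlt
    · rcases hstd i' hi' i hi hlt with h | ⟨s, g1, g2, g3, g4, g5⟩
      · exact absurd ((h r htr hrd).symm.trans hi'm) him
      rcases lt_trichotomy s r with h | rfl | h
      · have := g5 r r h hrd h hrd
        omega
      · exact ⟨fun j h1 h2 => (g3 j h1 h2).symm.trans (hwrun i' hi' hi'm j h1 h2.le), g5⟩
      · exact absurd ((g3 r htr h).symm.trans hi'm) him
    · exact absurd hi'm him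
    · rcases hstd i hi i' hi' hlt with h | ⟨s, g1, g2, g3, g4, g5⟩
      · exact absurd ((h r htr hrd).trans hi'm) him
      rcases le_or_gt s r with h | h
      · have h1 := hwrun i' hi' hi'm s g1 h
        have h2 := (hwm i hi).trans (hw i t s g1 g2)
        omega
      · exact absurd ((g3 r htr h).trans hi'm) him
  set W' := W.filter (fun i => w i r = m) with hW'
  set U0 := U.filter (fun i => u i r = m) with hU0
  have hcw : ∑ i ∈ W, cnt (m + 1 ≤ ·) (w i) t d + W'.card ≤ W.card * (d - r) := by
    rw [hW', Finset.card_filter, ← Finset.sum_add_distrib, ← smul_eq_mul]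
    refine Finset.sum_le_card_nsmul _ _ _ fun i hi => ?_
    split_ifs with him
    · rw [cnt_split _ _ t (r + 1) d (by omega) (by omega), cnt_zero _ _ t (r + 1)]
      · have := cnt_le (m + 1 ≤ ·) (w i) (r + 1) d
        omega
      · intro j h1 h2
        have := hwrun i hi him j h1 (by omega)
        omega
    · rw [cnt_split _ _ t r d (by omega) (by omega), cnt_zero _ _ t r]
      · have := cnt_le (m + 1 ≤ ·) (w i) r d
        omega
      · intro j h1 h2
        have := (hsep f hf hr i hi him).1 j h1 h2
        omega
  have hcu : U.card * (d - r) ≤ ∑ i ∈ U, cnt (m + 1 ≤ ·) (u i) t d + U0.card := by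
    rw [hU0, Finset.card_filter, ← Finset.sum_add_distrib, ← smul_eq_mul]
    refine Finset.card_nsmul_le_sum _ _ _ fun i hi => ?_
    split_ifs with him
    · rw [cnt_split _ _ t (r + 1) d (by omega) (by omega), cnt_full _ _ (r + 1) d]
      · omega
      · -- The run of `m` in `u i` is not longer than the one in `w f`.
        intro j h1 h2
        have hj := hu i (r + 1) j h1 h2
        have hr1 := hr' (r + 1) (by omega) (by omega)
        obtain ⟨s, g1, g2, g3, g4⟩ := hlex i hi
        rcases lt_trichotomy s (r + 1) with h | rfl | h
        · have h1 := hurun i hi him s g1 (by omega)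
          have h2 := hfrun s g1 (by omega)
          omega
        · omega
        · have := g3 (r + 1) (by omega) h
          omega
    · rw [cnt_split _ _ t r d (by omega) (by omega), cnt_full _ _ r d]
      · omega
      · intro j h1 h2
        have h3 := hu i r j h1 h2
        have h4 := (hum i hi).trans (hu i t r htr hrd)
        omega
  have hk : W'.card ≤ U0.card := by
    have h3 := hdom (m + 1)
    rw [hcard] at hcw
    omega
  obtain ⟨U', hU'sub, hU'card⟩ := Finset.exists_subset_card_eq hk
  have hU'U : U' ⊆ U := hU'sub.trans (Finset.filter_subset _ _)
  have hU'r : ∀ i ∈ U', u i r = m := fun i hi => (Finset.mem_filter.1 (hU'sub hi)).2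
  refine ih (d - (r + 1)) (by omega) (r + 1) (by omega) W' U' hU'card.symm
    (Finset.mem_filter.2 ⟨hf, hr⟩) (fun i hi => hmin i (Finset.mem_filter.1 hi).1) ?_ ?_ ?_
  · intro i hi j hj hij
    rw [hW', Finset.mem_filter] at hi hj
    rcases hstd i hi.1 j hj.1 hij with h | ⟨s, h1, h2, h3, h4, h5⟩
    · exact Or.inl fun k hk => h k (by omega)
    · refine Or.inr ⟨s, ?_, h2, fun k hk => h3 k (by omega), h4, h5⟩
      by_contra! hs
      have e1 := hwrun i hi.1 hi.2 s h1 (by omega)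
      have e2 := hwrun j hj.1 hj.2 s h1 (by omega)
      omega
  · intro c
    by_cases hfull : ∀ i' ∈ W', cnt (c ≤ ·) (w i') (r + 1) d = d - (r + 1)
    · rw [Finset.sum_congr rfl hfull, Finset.sum_const, ← hU'card, ← Finset.sum_const]
      exact Finset.sum_le_sum fun i _ => cnt_le _ _ _ _
    -- Some tail entry of `W'` is below `c`; hence so is every entry of `W` outside these tails.
    obtain ⟨i', hi', j', hj', hj'd, hlt⟩ : ∃ i' ∈ W', ∃ j', r + 1 ≤ j' ∧ j' < d ∧ w i' j' < c := by
      by_contra! hc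
      exact hfull fun i' hi' => cnt_full _ _ _ _ (hc i' hi')
    rw [hW', Finset.mem_filter] at hi'
    have hmc : m < c := by
      have := hw i' r j' (by omega) hj'd
      omega
    have h1 : ∑ i ∈ W, cnt (c ≤ ·) (w i) t d = ∑ i ∈ W', cnt (c ≤ ·) (w i) (r + 1) d := by
      rw [hW', Finset.sum_filter]
      refine Finset.sum_congr rfl fun i hi => ?_
      split_ifs with him
      · rw [cnt_split _ _ t (r + 1) d (by omega) (by omega), cnt_zero _ _ t (r + 1), zero_add]
        intro j h1 h2
        have := hwrun i hi him j h1 (by omega)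
        omega
      · refine cnt_zero _ _ _ _ fun j h1 h2 => ?_
        have h3 := (hsep i' hi'.1 hi'.2 i hi him).2 (d - 1) j' (by omega) (by omega)
          (by omega) hj'd
        have h4 := hw i j (d - 1) (by omega) (by omega)
        omega
    have h2 : ∑ i ∈ U', cnt (c ≤ ·) (u i) (r + 1) d ≤ ∑ i ∈ U, cnt (c ≤ ·) (u i) t d := by
      refine le_trans (Finset.sum_le_sum fun i _ => ?_) (Finset.sum_le_sum_of_subset hU'U)
      rw [cnt_split _ (u i) t (r + 1) d (by omega) (by omega)]
      exact Nat.le_add_left _ _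
    exact h2.trans ((hdom c).trans h1.le)
  · intro i hi
    obtain ⟨s, h1, h2, h3, h4⟩ := hlex i (hU'U hi)
    refine ⟨s, ?_, h2, fun k hk => h3 k (by omega), h4⟩
    by_contra! hs
    have e1 := hfrun s h1 (by omega)
    have e2 := hurun i (hU'U hi) (hU'r i hi) s h1 (by omega)
    omega

/-! ### From tuples to words -/

/-- The tuple `a` as a word on `ℕ`; the value `0` past `d` is never used. -/
def extTup {n d : ℕ} (a : Fin d → Fin n) (j : ℕ) : ℕ := if h : j < d then (a ⟨j, h⟩ : ℕ) else 0

lemma extTup_val {n d : ℕ} (a : Fin d → Fin n) (j : Fin d) : extTup a j = (a j : ℕ) := by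
  simp [extTup]

lemma extTup_of_lt {n d : ℕ} (a : Fin d → Fin n) {j : ℕ} (h : j < d) :
    extTup a j = (a ⟨j, h⟩ : ℕ) := by
  simp [extTup, h]

lemma extTup_mono {n d : ℕ} {a : Fin d → Fin n} (h : Monotone a) : MonoOn (extTup a) d := by
  intro i j hij hj
  rw [extTup_of_lt a hj, extTup_of_lt a (hij.trans_lt hj)]
  exact h (Fin.mk_le_mk.2 hij)

lemma extTup_lex {n d : ℕ} {a b : Fin d → Fin n} (h : monGT a b) :
    LexLT (extTup a) (extTup b) 0 d := by
  obtain ⟨s, h1, h2⟩ := h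
  refine ⟨s, Nat.zero_le _, s.2, fun j _ hj => ?_, ?_⟩
  · rw [extTup_of_lt a (hj.trans s.2), extTup_of_lt b (hj.trans s.2), h1 _ (Fin.lt_def.2 hj)]
  · rw [extTup_val, extTup_val]
    exact h2

lemma extTup_std {n d : ℕ} {a b : Fin d → Fin n} (h : StdPair a b) :
    Std (extTup a) (extTup b) 0 d := by
  rcases h with rfl | ⟨s, h1, h2, h3⟩
  · exact Or.inl fun _ _ _ => rfl
  refine Or.inr ⟨s, Nat.zero_le _, s.2, fun j _ hj => ?_, ?_, fun j j' g1 g2 g3 g4 => ?_⟩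
  · rw [extTup_of_lt a (hj.trans s.2), extTup_of_lt b (hj.trans s.2), h1 _ (Fin.lt_def.2 hj)]
  · rw [extTup_val, extTup_val]
    exact h2
  · rw [extTup_of_lt b g2, extTup_of_lt a g4]
    exact h3 ⟨j, g2⟩ ⟨j', g4⟩ (Fin.lt_def.2 g1) (Fin.lt_def.2 g3)

lemma cnt_extTup {n d : ℕ} (p : ℕ → Prop) [DecidablePred p] (a : Fin d → Fin n) :
    cnt p (extTup a) 0 d = (tupMul a).countP (fun x : Fin n => p x) := by
  unfold cnt tupMul
  rw [Multiset.countP_map, ← Finset.filter_val, Finset.card_val, Finset.card_filter,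
    Finset.card_filter, ← Finset.range_eq_Ico, Finset.sum_range]
  simp only [extTup_val]

lemma sum_cnt_extTup {n d N : ℕ} (p : ℕ → Prop) [DecidablePred p] (w : Fin N → Fin d → Fin n) :
    ∑ i, cnt p (extTup (w i)) 0 d = (∑ i, tupMul (w i)).countP (fun x : Fin n => p x) := by
  simp only [cnt_extTup]
  exact (map_sum (Multiset.countPAddMonoidHom (fun x : Fin n => p x))
    (fun i => tupMul (w i)) Finset.univ).symm

lemma monGT_iff {n d : ℕ} (a b : Fin d → Fin n) : monGT a b ↔ toLex a < toLex b := Iff.rfl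

lemma monGE_iff {n d : ℕ} (a b : Fin d → Fin n) : monGE a b ↔ toLex a ≤ toLex b := by
  rw [le_iff_eq_or_lt, toLex_inj]
  rfl

lemma StdPair.monGE {n d : ℕ} {a b : Fin d → Fin n} (h : StdPair a b) : monGE a b := by
  rcases h with h | ⟨s, h1, h2, -⟩
  · exact Or.inl h
  · exact Or.inr ⟨s, h1, h2⟩

/-! ### Lexsegments are closed under standard factorization -/

/-- let `L(u,v)` be a lexsegment set of monomials of degree `d` and
`u_1,…,u_N ∈ L(u,v)`.  If `w_1 ⋯ w_N` is a standard product with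
`w_1 ⋯ w_N = u_1 ⋯ u_N`, then `w_1,…,w_N ∈ L(u,v)`. -/
theorem stmt4 {n d N : ℕ} (hn : 0 < n) (hd : 0 < d)
    (u v : Fin d → Fin n) (hu : Monotone u) (hv : Monotone v)
    (huv : monGE u v)
    (uu : Fin N → Fin d → Fin n)
    (huu : ∀ i, Monotone (uu i) ∧ monGE u (uu i) ∧ monGE (uu i) v)
    (w : Fin N → Fin d → Fin n) (hw : StdProd w)
    (heq : ∑ i, tupMul (w i) = ∑ i, tupMul (uu i)) :
    ∀ i, monGE u (w i) ∧ monGE (w i) v := by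
  have hdom : ∀ (p : ℕ → Prop) [DecidablePred p],
      ∑ i, cnt p (extTup (uu i)) 0 d ≤ ∑ i, cnt p (extTup (w i)) 0 d := by
    intro p _
    rw [sum_cnt_extTup, sum_cnt_extTup, heq]
  have hdec : ∀ i j : Fin N, i ≤ j → toLex (w i) ≤ toLex (w j) := by
    intro i j hij
    rcases hij.eq_or_lt with rfl | h
    · exact le_rfl
    · exact (monGE_iff _ _).1 (hw.2 i j h).monGE
  intro i
  have hN : 0 < N := i.pos
  constructor
  · rw [monGE_iff]
    by_contra! hc
    refine first_aux (fun i => extTup (w i)) (fun i => extTup (uu i))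
      (fun i => extTup_mono (hw.1 i)) (fun i => extTup_mono (huu i).1) ⟨0, hN⟩ d 0 (by simp)
      Finset.univ Finset.univ rfl (Finset.mem_univ _) (fun j _ => Fin.le_def.2 (Nat.zero_le _))
      (fun i _ j _ hij => extTup_std (hw.2 i j hij)) (fun c => hdom _) fun j _ => extTup_lex ?_
    rw [monGT_iff]
    exact ((hdec _ i (Fin.le_def.2 (Nat.zero_le _))).trans_lt hc).trans_le
      ((monGE_iff _ _).1 (huu j).2.1)
  · rw [monGE_iff]
    by_contra! hc
    refine last_aux (fun i => extTup (w i)) (fun i => extTup (uu i))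
      (fun i => extTup_mono (hw.1 i)) (fun i => extTup_mono (huu i).1) ⟨N - 1, by omega⟩ d 0
      (by simp) Finset.univ Finset.univ rfl (Finset.mem_univ _)
      (fun j _ => Fin.le_def.2 (Nat.le_sub_one_of_lt j.2))
      (fun i _ j _ hij => extTup_std (hw.2 i j hij)) (fun c => hdom _) fun j _ => extTup_lex ?_
    rw [monGT_iff]
    exact (((monGE_iff _ _).1 (huu j).2.2).trans_lt hc).trans_le
      (hdec i _ (Fin.le_def.2 (Nat.le_sub_one_of_lt i.2)))
end
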